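/- Sub-coeffecting of the coeffect-instrumented operational semantics: suppose γ' ≤co γ (pointwise). Then (1) if γ·ρ ⊢ V ⇓ W then γ'·ρ ⊢ V ⇓ W; (2) if γ·ρ ⊢ M ⇓ T then γ'·ρ ⊢ M ⇓ T. -/

import Mathlib

set_option autoImplicit false

/-- A preordered semiring of grades `(Q, +, 0, ·, 1, ≤co)`,
where `≤co` is a preorder respected by `+` and `·`. -/
structure CoSig (Q : Type) where
  add : Q → Q → Q
  zero : Q
  mul : Q → Q → Q
  one : Q
  le : Q → Q → Prop
  add_assoc : ∀ a b c, add (add a b) c = add a (add b c)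
  add_comm : ∀ a b, add a b = add b a
  add_zero : ∀ a, add a zero = a
  mul_assoc : ∀ a b c, mul (mul a b) c = mul a (mul b c)
  one_mul : ∀ a, mul one a = a
  mul_one : ∀ a, mul a one = a
  zero_mul : ∀ a, mul zero a = zero
  mul_zero : ∀ a, mul a zero = zero
  left_distrib : ∀ a b c, mul a (add b c) = add (mul a b) (mul a c)
  right_distrib : ∀ a b c, mul (add a b) c = add (mul a c) (mul b c)
  le_refl : ∀ a, le a a
  le_trans : ∀ a b c, le a b → le b c → le a c
  add_le_add : ∀ a b c d, le a b → le c d → le (add a c) (add b d)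
  mul_le_mul : ∀ a b c d, le a b → le c d → le (mul a c) (mul b d)

namespace CBPVCo

/-- Pointwise comparison of grade vectors: `γ₁ ≤co γ₂`. -/
def vle {Q : Type} (S : CoSig Q) (γ₁ γ₂ : List Q) : Prop := List.Forall₂ S.le γ₁ γ₂

/-- Pointwise addition of grade vectors. -/
def vadd {Q : Type} (S : CoSig Q) (γ₁ γ₂ : List Q) : List Q := List.zipWith S.add γ₁ γ₂

/-- Pointwise scaling of a grade vector: `q·γ`. -/
def vscale {Q : Type} (S : CoSig Q) (q : Q) (γ : List Q) : List Q := γ.map (S.mul q)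

/-- `γ ≤co 0̄`: every entry of the grade vector is discardable. -/
def leZero {Q : Type} (S : CoSig Q) (γ : List Q) : Prop := ∀ q ∈ γ, S.le q S.zero

mutual
/-- CBPV value types (coeffect version): `unit`, thunks `U B`, positive products. -/
inductive VTy (Q : Type) : Type where
  | unit : VTy Q
  | thunk : CTy Q → VTy Q
  | prod : VTy Q → VTy Q → VTy Q
/-- CBPV computation types (coeffect version): graded functions `A^q → B`,
graded returners `F_q A`, negative products. -/
inductive CTy (Q : Type) : Type where
  | arr : VTy Q → Q → CTy Q → CTy Q
  | F : Q → VTy Q → CTy Q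
  | wth : CTy Q → CTy Q → CTy Q
end

mutual
/-- CBPV values (de Bruijn indices for variables). -/
inductive Val (Q : Type) : Type where
  | var : Nat → Val Q
  | unit : Val Q
  | thunk : Comp Q → Val Q
  | pair : Val Q → Val Q → Val Q
/-- CBPV computations, with grade annotations on binders and on `return`. -/
inductive Comp (Q : Type) : Type where
  | lam : Q → Comp Q → Comp Q
  | app : Comp Q → Val Q → Comp Q
  | force : Val Q → Comp Q
  | split : Q → Val Q → Comp Q → Comp Q
  | cpair : Comp Q → Comp Q → Comp Q
  | fst : Comp Q → Comp Q
  | snd : Comp Q → Comp Q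
  | ret : Q → Val Q → Comp Q
  | letin : Q → Comp Q → Comp Q → Comp Q
end

/-- Closed values: closures (capturing a grade vector and an environment),
unit, and pairs of closed values. -/
inductive CloVal (Q : Type) : Type where
  | clo : List Q → List (CloVal Q) → Comp Q → CloVal Q
  | unit : CloVal Q
  | pair : CloVal Q → CloVal Q → CloVal Q

/-- Closed terminal computations. -/
inductive Terminal (Q : Type) : Type where
  | ret : Q → CloVal Q → Terminal Q
  | lamClo : List Q → List (CloVal Q) → Q → Comp Q → Terminal Q
  | cpairClo : List Q → List (CloVal Q) → Comp Q → Comp Q → Terminal Q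

/-- The coeffect-instrumented value judgment `γ·ρ ⊢ V ⇓ W`. -/
inductive EvalVal {Q : Type} (S : CoSig Q) :
    List Q → List (CloVal Q) → Val Q → CloVal Q → Prop where
  | var : ∀ {γ : List Q} {ρ : List (CloVal Q)} {x : Nat} {q : Q} {W : CloVal Q},
      γ.length = ρ.length → ρ[x]? = some W → γ[x]? = some q → S.le q S.one →
      (∀ (i : Nat) (q' : Q), i ≠ x → γ[i]? = some q' → S.le q' S.zero) →
      EvalVal S γ ρ (.var x) W
  | unit : ∀ {γ : List Q} {ρ : List (CloVal Q)},
      γ.length = ρ.length → leZero S γ → EvalVal S γ ρ .unit .unit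
  | thunk : ∀ {γ γ' : List Q} {ρ : List (CloVal Q)} {M : Comp Q},
      vle S γ γ' → EvalVal S γ ρ (.thunk M) (.clo γ' ρ M)
  | pair : ∀ {γ γ₁ γ₂ : List Q} {ρ : List (CloVal Q)} {V₁ V₂ : Val Q} {W₁ W₂ : CloVal Q},
      EvalVal S γ₁ ρ V₁ W₁ → EvalVal S γ₂ ρ V₂ W₂ → vle S γ (vadd S γ₁ γ₂) →
      EvalVal S γ ρ (.pair V₁ V₂) (.pair W₁ W₂)

/-- The coeffect-instrumented big-step judgment `γ·ρ ⊢ M ⇓ T`. -/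
inductive EvalComp {Q : Type} (S : CoSig Q) :
    List Q → List (CloVal Q) → Comp Q → Terminal Q → Prop where
  | lam : ∀ {γ γ' : List Q} {ρ : List (CloVal Q)} {q : Q} {M : Comp Q},
      vle S γ γ' → EvalComp S γ ρ (.lam q M) (.lamClo γ' ρ q M)
  | cpair : ∀ {γ γ' : List Q} {ρ : List (CloVal Q)} {M₁ M₂ : Comp Q},
      vle S γ γ' → EvalComp S γ ρ (.cpair M₁ M₂) (.cpairClo γ' ρ M₁ M₂)
  | ret : ∀ {γ γ₁ : List Q} {ρ : List (CloVal Q)} {q : Q} {V : Val Q} {W : CloVal Q},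
      EvalVal S γ₁ ρ V W → vle S γ (vscale S q γ₁) →
      EvalComp S γ ρ (.ret q V) (.ret q W)
  | app : ∀ {γ γ₁ γ₂ γ' : List Q} {ρ ρ' : List (CloVal Q)} {M M' : Comp Q}
      {V : Val Q} {W : CloVal Q} {q : Q} {T : Terminal Q},
      EvalComp S γ₁ ρ M (.lamClo γ' ρ' q M') → EvalVal S γ₂ ρ V W →
      EvalComp S (q :: γ') (W :: ρ') M' T → vle S γ (vadd S γ₁ (vscale S q γ₂)) →
      EvalComp S γ ρ (.app M V) T
  | force : ∀ {γ γ' : List Q} {ρ ρ' : List (CloVal Q)} {V : Val Q} {M : Comp Q} {T : Terminal Q},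
      EvalVal S γ ρ V (.clo γ' ρ' M) → EvalComp S γ' ρ' M T → EvalComp S γ ρ (.force V) T
  | letin : ∀ {γ γ₁ γ₂ : List Q} {ρ : List (CloVal Q)} {q₁ q₂ : Q} {M N : Comp Q}
      {W : CloVal Q} {T : Terminal Q},
      EvalComp S γ₁ ρ M (.ret q₁ W) → EvalComp S (S.mul q₁ q₂ :: γ₂) (W :: ρ) N T →
      vle S γ (vadd S (vscale S q₂ γ₁) γ₂) → EvalComp S γ ρ (.letin q₂ M N) T
  | split : ∀ {γ γ₁ γ₂ : List Q} {ρ : List (CloVal Q)} {q : Q} {V : Val Q}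
      {W₁ W₂ : CloVal Q} {N : Comp Q} {T : Terminal Q},
      EvalVal S γ₁ ρ V (.pair W₁ W₂) → EvalComp S (q :: q :: γ₂) (W₂ :: W₁ :: ρ) N T →
      vle S γ (vadd S (vscale S q γ₁) γ₂) → EvalComp S γ ρ (.split q V N) T
  | fst : ∀ {γ γ' : List Q} {ρ ρ' : List (CloVal Q)} {M M₁ M₂ : Comp Q} {T : Terminal Q},
      EvalComp S γ ρ M (.cpairClo γ' ρ' M₁ M₂) → EvalComp S γ' ρ' M₁ T →
      EvalComp S γ ρ (.fst M) T
  | snd : ∀ {γ γ' : List Q} {ρ ρ' : List (CloVal Q)} {M M₁ M₂ : Comp Q} {T : Terminal Q},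
      EvalComp S γ ρ M (.cpairClo γ' ρ' M₁ M₂) → EvalComp S γ' ρ' M₂ T →
      EvalComp S γ ρ (.snd M) T

theorem vle_trans {Q : Type} (S : CoSig Q) {a b c : List Q}
    (h : vle S a b) (h' : vle S b c) : vle S a c := by
  unfold vle at *
  induction h generalizing c with
  | nil => exact h'
  | cons h1 _ ih =>
    cases h' with
    | cons h3 h4 => exact .cons (S.le_trans _ _ _ h1 h3) (ih h4)

theorem vle_get {Q : Type} (S : CoSig Q) {a b : List Q} (h : vle S a b) :
    ∀ (i : Nat) (q : Q), a[i]? = some q → ∃ r, b[i]? = some r ∧ S.le q r := by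
  unfold vle at h
  induction h with
  | nil => intro i q hq; simp at hq
  | cons h1 _ ih =>
    intro i q hq
    cases i with
    | zero => simp at hq; subst hq; exact ⟨_, by simp, h1⟩
    | succ n => simpa using ih n q (by simpa using hq)

theorem evalVal_sub {Q : Type} (S : CoSig Q) {γ γ' : List Q} (hle : vle S γ' γ)
    {ρ : List (CloVal Q)} {V : Val Q} {W : CloVal Q}
    (h : EvalVal S γ ρ V W) : EvalVal S γ' ρ V W := by
  have hlen : γ'.length = γ.length := List.Forall₂.length_eq hle
  cases h with
  | @var _ _ x q _ hl hr hg h1 h0 =>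
    have hx : x < γ'.length := by
      rw [hlen]; exact (List.getElem?_eq_some_iff.1 hg).1
    have hx' : γ'[x]? = some γ'[x] := List.getElem?_eq_getElem hx
    refine .var (hlen.trans hl) hr hx' ?_ ?_
    · obtain ⟨r, hr1, hr2⟩ := vle_get S hle _ _ hx'
      rw [hg] at hr1
      cases hr1
      exact S.le_trans _ _ _ hr2 h1
    · intro i q' hi hq
      obtain ⟨r, hr1, hr2⟩ := vle_get S hle _ _ hq
      exact S.le_trans _ _ _ hr2 (h0 i r hi hr1)
  | unit hl h0 =>
    refine .unit (hlen.trans hl) ?_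
    intro q hq
    obtain ⟨i, hi⟩ := List.mem_iff_getElem?.1 hq
    obtain ⟨r, hr1, hr2⟩ := vle_get S hle _ _ hi
    exact S.le_trans _ _ _ hr2 (h0 r (List.mem_of_getElem? hr1))
  | thunk h => exact .thunk (vle_trans S hle h)
  | pair h1 h2 h => exact .pair h1 h2 (vle_trans S hle h)

theorem evalComp_sub {Q : Type} (S : CoSig Q) {γ γ' : List Q} (hle : vle S γ' γ)
    {ρ : List (CloVal Q)} {M : Comp Q} {T : Terminal Q}
    (h : EvalComp S γ ρ M T) : EvalComp S γ' ρ M T := by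
  induction h generalizing γ' with
  | lam h => exact .lam (vle_trans S hle h)
  | cpair h => exact .cpair (vle_trans S hle h)
  | ret h1 h => exact .ret h1 (vle_trans S hle h)
  | app h1 h2 h3 h => exact .app h1 h2 h3 (vle_trans S hle h)
  | force h1 h2 => exact .force (evalVal_sub S hle h1) h2
  | letin h1 h2 h => exact .letin h1 h2 (vle_trans S hle h)
  | split h1 h2 h => exact .split h1 h2 (vle_trans S hle h)
  | fst h1 h2 ih1 => exact .fst (ih1 hle) h2
  | snd h1 h2 ih1 => exact .snd (ih1 hle) h2

/-- Sub-coeffecting of the coeffect-instrumented operational semantics: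
if `γ' ≤co γ` (pointwise), then any evaluation under `γ` is also an
evaluation under `γ'`, with the same result. -/
theorem semantic_sub_coeffecting {Q : Type} (S : CoSig Q) {γ γ' : List Q} (hle : vle S γ' γ) :
    (∀ {ρ : List (CloVal Q)} {V : Val Q} {W : CloVal Q},
      EvalVal S γ ρ V W → EvalVal S γ' ρ V W) ∧
    (∀ {ρ : List (CloVal Q)} {M : Comp Q} {T : Terminal Q},
      EvalComp S γ ρ M T → EvalComp S γ' ρ M T) := by
  exact ⟨fun h => evalVal_sub S hle h, fun h => evalComp_sub S hle h⟩

end CBPVCo
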